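/- arXiv:2503.22323 — 3 statements merged into one kernel-verified Lean document; each statement's English description precedes it below -/
import Mathlib

section
/- Let m, k, ℓ be nonnegative integers such that m + k − ℓ is even and 0 ≤ (m + k − ℓ)/2 ≤ min(k,m), and let λ̃ ∈ ℂ. Define μ := (1 − λ̃, (λ̃ + m)/2, (λ̃ − m − 2)/2) ∈ ℂ³ and η := (1 − λ̃ − k, (λ̃ + k + ℓ)/2, (λ̃ + k − ℓ − 2)/2) ∈ ℂ³. Then there exists a permutation σ of {1,2,3} with η_i = μ_{σ(i)} for i = 1, 2, 3 if and only if one of the following holds: (a) k = 0 and ℓ = m; (b) ℓ = m + k and λ̃ = (2 − m − 2k)/3; (c) m ≥ k, ℓ = m − k and λ̃ = (4 + m − 2k)/3. -/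
/-!
Put `a = 1 - λ̃`. Both `μ` and `η` have coordinate sum zero, and a vector of sum zero is determined
by its first coordinate and the difference of its last two, which are `(a, m + 1)` for `μ` and
`(a - k, ℓ + 1)` for `η`. Each of the six permutations therefore amounts to two linear equations
in `a, k, ℓ, m`. Two of the six contradict nonnegativity, three give (a), (b) and (c), and the last
forces `k = ℓ + m + 2`, that is, `(m + k - ℓ) / 2 = m + 1 > m`.
-/

lemma exists_perm_fin_three_iff (P : Fin 3 → Fin 3 → Fin 3 → Prop) :
    (∃ σ : Equiv.Perm (Fin 3), P (σ 0) (σ 1) (σ 2)) ↔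
      (P 0 1 2 ∨ P 0 2 1) ∨ (P 1 0 2 ∨ P 1 2 0) ∨ (P 2 0 1 ∨ P 2 1 0) := by
  have univ_eq : (Finset.univ : Finset (Equiv.Perm (Fin 3))) =
      {1, Equiv.swap 1 2, Equiv.swap 0 1, finRotate 3, (finRotate 3).symm, Equiv.swap 0 2} := by
    decide
  have exists_iff (Q : Equiv.Perm (Fin 3) → Prop) : (∃ σ, Q σ) ↔ ∃ σ ∈ Finset.univ, Q σ := by
    simp
  rw [exists_iff, univ_eq]
  simp only [Finset.exists_mem_insert, Finset.mem_singleton, exists_eq_left, or_assoc]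
  rfl

section NatCast

variable {R : Type*} [Ring R] [CharZero R]

lemma natCast_add_one_eq_or_eq_neg_iff {l c : ℕ} :
    ((l : R) + 1 = c + 1 ∨ (l : R) + 1 = -(c + 1)) ↔ l = c := by
  have ne_neg : (l : R) + 1 ≠ -(c + 1) := by
    rw [Ne, eq_neg_iff_add_eq_zero]
    exact_mod_cast Nat.succ_ne_zero (l + 1 + c)
  rw [or_iff_left ne_neg, add_left_inj, Nat.cast_inj]

lemma natCast_add_one_eq_sub_or_eq_neg_sub_iff {l m k : ℕ} :
    ((l : R) + 1 = m + 1 - k ∨ (l : R) + 1 = -(m + 1 - k)) ↔ m = l + k ∨ k = l + m + 2 := by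
  rw [neg_sub, eq_sub_iff_add_eq, eq_sub_iff_add_eq]
  norm_cast
  omega

end NatCast

section SumZeroVec

variable {K : Type*} [Field K]

/-- The vector of `K³` with coordinate sum zero (a weight of `𝔰𝔩(3)`) whose first coordinate is `a`
and whose last two coordinates differ by `p`. These parameters put `μ` and `η` in a common form,
in which exchanging the last two coordinates is `p ↦ -p`. -/
def sumZeroVec (a p : K) : Fin 3 → K :=
  ![a, (-a + p) / 2, (-a - p) / 2]

variable [NeZero (2 : K)]

lemma sum_sumZeroVec (a p : K) : ∑ i, sumZeroVec a p i = 0 := by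
  simp only [sumZeroVec, Fin.sum_univ_three, Matrix.cons_val]
  field_simp
  ring

lemma sumZeroVec_eq_iff {a p : K} {x : Fin 3 → K} (hx : ∑ i, x i = 0) :
    sumZeroVec a p = x ↔ a = x 0 ∧ p = x 1 - x 2 := by
  constructor
  · rintro rfl
    refine ⟨rfl, ?_⟩
    simp only [sumZeroVec, Matrix.cons_val]
    field_simp
    ring
  · rintro ⟨rfl, rfl⟩
    rw [Fin.sum_univ_three] at hx
    funext i
    match i with
    | 0 => rfl
    | 1 => exact (div_eq_iff two_ne_zero).2 (by linear_combination -hx)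
    | 2 => exact (div_eq_iff two_ne_zero).2 (by linear_combination -hx)

lemma exists_perm_sumZeroVec_eq_iff {a p k q : K} :
    (∃ σ : Equiv.Perm (Fin 3), ∀ i, sumZeroVec (a - k) q i = sumZeroVec a p (σ i)) ↔
      (k = 0 ∧ (q = p ∨ q = -p)) ∨
      (2 * k = 3 * a - p ∧ (q = p + k ∨ q = -(p + k))) ∨
      (2 * k = 3 * a + p ∧ (q = p - k ∨ q = -(p - k))) := by
  have eq_comp_iff (σ : Equiv.Perm (Fin 3)) :
      (∀ i, sumZeroVec (a - k) q i = sumZeroVec a p (σ i)) ↔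
        a - k = sumZeroVec a p (σ 0) ∧ q = sumZeroVec a p (σ 1) - sumZeroVec a p (σ 2) := by
    rw [← funext_iff]
    exact sumZeroVec_eq_iff ((Equiv.sum_comp σ _).trans (sum_sumZeroVec a p))
  have two_ne : (2 : K) ≠ 0 := two_ne_zero
  simp only [eq_comp_iff]
  rw [exists_perm_fin_three_iff fun i₀ i₁ i₂ =>
    a - k = sumZeroVec a p i₀ ∧ q = sumZeroVec a p i₁ - sumZeroVec a p i₂]
  simp only [← and_or_left, sumZeroVec, Matrix.cons_val]
  refine or_congr ?_ (or_congr ?_ ?_) <;> grind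

end SumZeroVec

theorem stmt2_general {K : Type*} [Field K] [CharZero K] (m k l : ℕ) (lam : K) :
    (∃ σ : Equiv.Perm (Fin 3),
      ∀ i : Fin 3,
        (![1 - lam - k, (lam + k + l) / 2, (lam + k - l - 2) / 2] : Fin 3 → K) i
          = (![1 - lam, (lam + m) / 2, (lam - m - 2) / 2] : Fin 3 → K) (σ i))
    ↔ ((k = 0 ∧ l = m)
        ∨ (l = m + k ∧ lam = (2 - (m : K) - 2 * k) / 3)
        ∨ (m = l + k ∧ lam = (4 + (m : K) - 2 * k) / 3)
        ∨ (k = l + m + 2 ∧ lam = (4 + (m : K) - 2 * k) / 3)) := by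
  have eta_eq : ![1 - lam - k, (lam + k + l) / 2, (lam + k - l - 2) / 2]
      = sumZeroVec (1 - lam - k) (l + 1) := by
    unfold sumZeroVec
    congr! 3 <;> ring
  have mu_eq : ![1 - lam, (lam + m) / 2, (lam - m - 2) / 2] = sumZeroVec (1 - lam) (m + 1) := by
    unfold sumZeroVec
    congr! 3 <;> ring
  have eq_sub_iff_lam_eq :
      (2 : K) * k = 3 * (1 - lam) - (m + 1) ↔ lam = (2 - m - 2 * k) / 3 := by
    rw [eq_div_iff three_ne_zero]
    constructor <;> intro h <;> linear_combination h
  have eq_add_iff_lam_eq :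
      (2 : K) * k = 3 * (1 - lam) + (m + 1) ↔ lam = (4 + m - 2 * k) / 3 := by
    rw [eq_div_iff three_ne_zero]
    constructor <;> intro h <;> linear_combination h
  rw [eta_eq, mu_eq, exists_perm_sumZeroVec_eq_iff, eq_sub_iff_lam_eq, eq_add_iff_lam_eq,
    Nat.cast_eq_zero, natCast_add_one_eq_or_eq_neg_iff, add_right_comm, ← Nat.cast_add,
    natCast_add_one_eq_or_eq_neg_iff, natCast_add_one_eq_sub_or_eq_neg_sub_iff]
  tauto

/-- matching of infinitesimal characters.  With
`μ = (1 − λ̃, (λ̃+m)/2, (λ̃−m−2)/2)` and `η = (1 − λ̃ − k, (λ̃+k+ℓ)/2, (λ̃+k−ℓ−2)/2)`,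
under the parity/range hypothesis on `(m,k,ℓ)`, the coordinates of `η` are a permutation
of those of `μ` iff (a) `k = 0, ℓ = m`, or (b) `ℓ = m+k, λ̃ = (2−m−2k)/3`, or
(c) `m ≥ k, ℓ = m−k, λ̃ = (4+m−2k)/3`. -/
theorem stmt2 (m k l : ℕ) (lam : ℂ)
    (hpar : ∃ d : ℤ, (m : ℤ) + k - l = 2 * d ∧ 0 ≤ d ∧ d ≤ min (k : ℤ) (m : ℤ)) :
    (∃ σ : Equiv.Perm (Fin 3),
      ∀ i : Fin 3,
        (![1 - lam - k, (lam + k + l) / 2, (lam + k - l - 2) / 2] : Fin 3 → ℂ) i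
          = (![1 - lam, (lam + m) / 2, (lam - m - 2) / 2] : Fin 3 → ℂ) (σ i))
    ↔ ((k = 0 ∧ l = m)
        ∨ (l = m + k ∧ lam = (2 - (m : ℂ) - 2 * k) / 3)
        ∨ ((k : ℤ) ≤ (m : ℤ) ∧ (l : ℤ) = (m : ℤ) - (k : ℤ)
            ∧ lam = (4 + (m : ℂ) - 2 * k) / 3)) := by
  have k_ne : k ≠ l + m + 2 := by omega
  rw [stmt2_general]
  grind
end

section
/- Let k, m be nonnegative integers and d an integer with 0 ≤ d ≤ min(k,m). The subspace of polynomials F ∈ ℂ[N₁, N₂, e₁, e₂, ε₁, ε₂] that are simultaneously homogeneous of degree k in (N₁,N₂), of degree m in (e₁,e₂), and of degree m + k − 2d in (ε₁,ε₂), and that satisfy g·F = F for all g ∈ SL(2,ℝ), is one-dimensional; it is spanned by ψ := (N₁ε₁ + N₂ε₂)^{k−d} · (e₁ε₁ + e₂ε₂)^{m−d} · (N₁e₂ − N₂e₁)^{d}. -/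
open MvPolynomial

noncomputable section

/-- The `(i,j)` entry of `g ∈ SL(2,ℝ)`, viewed as a complex number. -/
def gEntry (g : Matrix.SpecialLinearGroup (Fin 2) ℝ) (i j : Fin 2) : ℂ :=
  (((g : Matrix (Fin 2) (Fin 2) ℝ) i j : ℝ) : ℂ)

/-- The `(i,j)` entry of `g⁻¹`, viewed as a complex number. -/
def gInvEntry (g : Matrix.SpecialLinearGroup (Fin 2) ℝ) (i j : Fin 2) : ℂ :=
  ((((g⁻¹ : Matrix.SpecialLinearGroup (Fin 2) ℝ) : Matrix (Fin 2) (Fin 2) ℝ) i j : ℝ) : ℂ)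

/-- The action of `g ∈ SL(2,ℝ)` on `ℂ[N₁,N₂,e₁,e₂,ε₁,ε₂]` by linear substitution:
`(g·F)(N,e,ε) = F(gᵀN, gᵀe, g⁻¹ε)`.  Variables: `N₁ = X 0, N₂ = X 1, e₁ = X 2,
e₂ = X 3, ε₁ = X 4, ε₂ = X 5`. -/
def slAct (g : Matrix.SpecialLinearGroup (Fin 2) ℝ) :
    MvPolynomial (Fin 6) ℂ →ₐ[ℂ] MvPolynomial (Fin 6) ℂ :=
  aeval ![gEntry g 0 0 • X 0 + gEntry g 1 0 • X 1,
          gEntry g 0 1 • X 0 + gEntry g 1 1 • X 1,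
          gEntry g 0 0 • X 2 + gEntry g 1 0 • X 3,
          gEntry g 0 1 • X 2 + gEntry g 1 1 • X 3,
          gInvEntry g 0 0 • X 4 + gInvEntry g 0 1 • X 5,
          gInvEntry g 1 0 • X 4 + gInvEntry g 1 1 • X 5]

/-- `ψ = (N₁ε₁+N₂ε₂)^{k−d} (e₁ε₁+e₂ε₂)^{m−d} (N₁e₂−N₂e₁)^d`. -/
def psi (k m d : ℕ) : MvPolynomial (Fin 6) ℂ :=
  (X 0 * X 4 + X 1 * X 5) ^ (k - d) * (X 2 * X 4 + X 3 * X 5) ^ (m - d) *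
    (X 0 * X 3 - X 1 * X 2) ^ d

/-!
Where the area form `Δ = N₁e₂ − N₂e₁` does not vanish, `SL(2)` moves `(N, e, ε)` to the normal form
`N = (1, 0)`, `e = (0, Δ)`, `ε = (N·ε, e·ε / Δ)`. An invariant `F` is fixed by the diagonal torus,
hence is homogeneous of weight zero for it. Together with the three degrees this leaves only one
monomial of `F` that is nonzero on the normal forms, namely `N₁^k e₂^m ε₁^(k−d) ε₂^(m−d)`, and its
value there is `ψ`. So `F` is a multiple of `ψ` off `Δ = 0`, and by density everywhere.
-/

section ScalingVariables

variable {σ R K L : Type*}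

lemma coeff_aeval_smul_X [CommSemiring R] (a : σ → R) (F : MvPolynomial σ R) (c : σ →₀ ℕ) :
    coeff c (aeval (fun i => a i • (X i : MvPolynomial σ R)) F) =
      (c.prod fun i n => a i ^ n) * coeff c F := by
  classical
  induction F using MvPolynomial.induction_on' with
  | monomial u r =>
    have h_monomial : aeval (fun i => a i • (X i : MvPolynomial σ R)) (monomial u r) =
        monomial u ((u.prod fun i n => a i ^ n) * r) := by
      rw [aeval_monomial, monomial_eq]
      simp only [Finsupp.prod, smul_eq_C_mul, mul_pow, Finset.prod_mul_distrib, C_mul, map_prod,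
        map_pow, algebraMap_eq]
      ring
    rw [h_monomial, coeff_monomial, coeff_monomial]
    split_ifs with h
    · rw [h]
    · rw [mul_zero]
  | add p q hp hq => rw [map_add, coeff_add, hp, hq, coeff_add, mul_add]

lemma prod_zpow_pow_eq_zpow_weight {G : Type*} [CommGroup G] (t : G) (w : σ → ℤ) (c : σ →₀ ℕ) :
    (c.prod fun i n => (t ^ w i) ^ n) = t ^ Finsupp.weight w c := by
  change _ = zpowersHom G t (Multiplicative.ofAdd (Finsupp.weight w c))
  rw [Finsupp.weight_apply, Finsupp.sum, ofAdd_sum, map_prod]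
  simp only [ofAdd_nsmul, map_pow, zpowersHom_apply, toAdd_ofAdd, Finsupp.prod]

lemma eq_zero_of_forall_units_zpow_eq_one [CommRing R] [IsDomain R] [Infinite Rˣ] {n : ℤ}
    (h : ∀ t : Rˣ, t ^ n = 1) : n = 0 := by
  by_contra hn
  have : NeZero n.natAbs := ⟨Int.natAbs_ne_zero.2 hn⟩
  have h_top : rootsOfUnity n.natAbs R = ⊤ :=
    (Subgroup.eq_top_iff' _).2 fun t => (mem_rootsOfUnity _ t).2 (pow_natAbs_eq_one.2 (h t))
  have h_finite : Finite (⊤ : Subgroup Rˣ) := h_top ▸ inferInstance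
  exact not_finite_iff_infinite.2 ‹_› (Finite.of_equiv _ Subgroup.topEquiv.toEquiv)

lemma isWeightedHomogeneous_zero_of_forall_aeval_zpow_smul_X [CommRing K] [IsDomain K]
    [Infinite Kˣ] [CommRing L] [IsDomain L] [Algebra K L] [FaithfulSMul K L]
    (w : σ → ℤ) {F : MvPolynomial σ L}
    (hF : ∀ t : Kˣ, aeval (fun i => ((t ^ w i : Kˣ) : K) • (X i : MvPolynomial σ L)) F = F) :
    IsWeightedHomogeneous w F 0 := by
  intro c hc
  refine eq_zero_of_forall_units_zpow_eq_one (R := K) fun t => ?_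
  have h_coeff := coeff_aeval_smul_X (fun i => algebraMap K L (t ^ w i : Kˣ)) F c
  simp only [algebraMap_smul, hF t] at h_coeff
  have h_prod : algebraMap K L (c.prod fun i n => (t ^ w i) ^ n : Kˣ) = 1 := by
    simpa only [Finsupp.prod, Units.coe_prod, Units.val_pow_eq_pow_val, map_prod, map_pow] using
      mul_eq_right₀ hc |>.1 h_coeff.symm
  rw [prod_zpow_pow_eq_zpow_weight] at h_prod
  exact Units.ext (FaithfulSMul.algebraMap_injective K L (h_prod.trans (map_one _).symm))

end ScalingVariables

lemma infinite_units {K : Type*} [Field K] [Infinite K] : Infinite Kˣ :=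
  have : Infinite {x : K // x ≠ 0} := (Set.finite_singleton (0 : K)).infinite_compl.to_subtype
  .of_injective _ unitsEquivNeZero.symm.injective

section BasicInvariants

variable {A B : Type*} [CommRing A] [CommRing B]

/-- The invariant contraction `N₁ε₁ + N₂ε₂`, at the point `v = (N₁, N₂, e₁, e₂, ε₁, ε₂)`. -/
def contractN (v : Fin 6 → A) : A := v 0 * v 4 + v 1 * v 5

/-- The invariant contraction `e₁ε₁ + e₂ε₂`, at the point `v = (N₁, N₂, e₁, e₂, ε₁, ε₂)`. -/
def contractE (v : Fin 6 → A) : A := v 2 * v 4 + v 3 * v 5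

/-- The area form `N₁e₂ − N₂e₁`, whose nonvanishing singles out the generic orbits. -/
def areaForm (v : Fin 6 → A) : A := v 0 * v 3 - v 1 * v 2

/-- The product `ψ` of powers of the three basic invariants, evaluated at a point `v`; its value
at `v = X` is the polynomial `ψ` itself. -/
def psiAt (k m d : ℕ) (v : Fin 6 → A) : A :=
  contractN v ^ (k - d) * contractE v ^ (m - d) * areaForm v ^ d

lemma map_areaForm (f : A →+* B) (v : Fin 6 → A) : f (areaForm v) = areaForm fun i => f (v i) := by
  simp only [areaForm, map_sub, map_mul]

lemma map_psiAt (f : A →+* B) (k m d : ℕ) (v : Fin 6 → A) :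
    f (psiAt k m d v) = psiAt k m d fun i => f (v i) := by
  simp only [psiAt, contractN, contractE, areaForm, map_add, map_sub, map_mul, map_pow]

lemma psiAt_X_ne_zero [Nontrivial A] (k m d : ℕ) :
    psiAt k m d (X : Fin 6 → MvPolynomial (Fin 6) A) ≠ 0 := by
  intro h
  have h_eval := congrArg (eval ![1, 0, 0, 1, 1, 1]) h
  simp [psiAt, contractN, contractE, areaForm] at h_eval

end BasicInvariants

section Transform

variable {K A B : Type*} [CommRing K] [CommRing A] [Algebra K A] [CommRing B] [Algebra K B]

/-- The substitution `(N, e, ε) ↦ (gᵀN, gᵀe, g⁻¹ε)`, with a triple of vectors encoded as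
`v = (N₁, N₂, e₁, e₂, ε₁, ε₂)`. Taking coordinates in an arbitrary algebra lets the same map
act on points (`A = K`) and on the variables of a polynomial ring. -/
def slTransform (g : Matrix.SpecialLinearGroup (Fin 2) K) (v : Fin 6 → A) : Fin 6 → A :=
  ![g 0 0 • v 0 + g 1 0 • v 1,
    g 0 1 • v 0 + g 1 1 • v 1,
    g 0 0 • v 2 + g 1 0 • v 3,
    g 0 1 • v 2 + g 1 1 • v 3,
    g⁻¹ 0 0 • v 4 + g⁻¹ 0 1 • v 5,
    g⁻¹ 1 0 • v 4 + g⁻¹ 1 1 • v 5]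

lemma slTransform_eq (g : Matrix.SpecialLinearGroup (Fin 2) K) (v : Fin 6 → A) :
    slTransform g v =
      ![g 0 0 • v 0 + g 1 0 • v 1,
        g 0 1 • v 0 + g 1 1 • v 1,
        g 0 0 • v 2 + g 1 0 • v 3,
        g 0 1 • v 2 + g 1 1 • v 3,
        g 1 1 • v 4 - g 0 1 • v 5,
        g 0 0 • v 5 - g 1 0 • v 4] := by
  simp [slTransform, Matrix.SpecialLinearGroup.SL2_inv_expl, sub_eq_add_neg, add_comm]

lemma map_comp_slTransform (f : A →ₐ[K] B) (g : Matrix.SpecialLinearGroup (Fin 2) K)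
    (v : Fin 6 → A) : f ∘ slTransform g v = slTransform g (f ∘ v) := by
  funext i
  fin_cases i <;> simp [slTransform]

/-- The action `(g·F)(N, e, ε) = F(gᵀN, gᵀe, g⁻¹ε)` of `SL(2, K)` on polynomials with coefficients
in a `K`-algebra; `slAct` is the case of `SL(2, ℝ)` acting on complex polynomials. -/
def slSubst (g : Matrix.SpecialLinearGroup (Fin 2) K) :
    MvPolynomial (Fin 6) A →ₐ[A] MvPolynomial (Fin 6) A :=
  aeval (slTransform g X)

lemma eval_slSubst (g : Matrix.SpecialLinearGroup (Fin 2) K) (F : MvPolynomial (Fin 6) A)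
    (x : Fin 6 → A) : eval x (slSubst g F) = eval (slTransform g x) F := by
  have h_X : aeval (R := A) x ∘ slTransform g X = slTransform g x := by
    have h_comp := map_comp_slTransform ((aeval (R := A) x).restrictScalars K) g X
    simpa only [AlgHom.coe_restrictScalars', Function.comp_def, aeval_X] using h_comp
  rw [slSubst, ← coe_aeval_eq_eval, RingHom.coe_coe, comp_aeval_apply,
    ← Function.comp_def (aeval x), h_X, ← coe_aeval_eq_eval, RingHom.coe_coe]

lemma algebraMap_det_eq_one (g : Matrix.SpecialLinearGroup (Fin 2) K) :
    algebraMap K A (g 0 0) * algebraMap K A (g 1 1) -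
      algebraMap K A (g 0 1) * algebraMap K A (g 1 0) = 1 := by
  rw [← map_mul, ← map_mul, ← map_sub, ← Matrix.det_fin_two, g.det_coe, map_one]

lemma psiAt_slTransform (k m d : ℕ) (g : Matrix.SpecialLinearGroup (Fin 2) K) (v : Fin 6 → A) :
    psiAt k m d (slTransform g v) = psiAt k m d v := by
  have h_det := algebraMap_det_eq_one (A := A) g
  have h_contractN : contractN (slTransform g v) = contractN v := by
    simp only [contractN, slTransform_eq, Algebra.smul_def, Matrix.cons_val]
    linear_combination (v 0 * v 4 + v 1 * v 5) * h_det
  have h_contractE : contractE (slTransform g v) = contractE v := by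
    simp only [contractE, slTransform_eq, Algebra.smul_def, Matrix.cons_val]
    linear_combination (v 2 * v 4 + v 3 * v 5) * h_det
  have h_areaForm : areaForm (slTransform g v) = areaForm v := by
    simp only [areaForm, slTransform_eq, Algebra.smul_def, Matrix.cons_val]
    linear_combination (v 0 * v 3 - v 1 * v 2) * h_det
  rw [psiAt, h_contractN, h_contractE, h_areaForm, psiAt]

lemma slSubst_psiAt_X (k m d : ℕ) (g : Matrix.SpecialLinearGroup (Fin 2) K) :
    slSubst g (psiAt k m d (X : Fin 6 → MvPolynomial (Fin 6) A)) = psiAt k m d X := by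
  have h_map := map_psiAt (slSubst (A := A) g).toRingHom k m d X
  simp only [AlgHom.toRingHom_eq_coe, RingHom.coe_coe, slSubst, aeval_X] at h_map
  exact h_map.trans (psiAt_slTransform k m d g X)

/-- The element `diag(t, t⁻¹)` of the diagonal torus, under which invariance is a weight condition
on monomials. -/
def slTorus (t : Kˣ) : Matrix.SpecialLinearGroup (Fin 2) K :=
  ⟨!![(t : K), 0; 0, ((t⁻¹ : Kˣ) : K)], by simp⟩

/-- The weights of `slTorus` on the six coordinates of `(N, e, ε)`. -/
def torusWeight : Fin 6 → ℤ := ![1, -1, 1, -1, -1, 1]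

lemma coe_slTorus (t : Kˣ) :
    (slTorus t : Matrix (Fin 2) (Fin 2) K) = !![(t : K), 0; 0, ((t⁻¹ : Kˣ) : K)] := rfl

lemma slTransform_slTorus (t : Kˣ) (v : Fin 6 → A) :
    slTransform (slTorus t) v = fun i => ((t ^ torusWeight i : Kˣ) : K) • v i := by
  funext i
  fin_cases i <;> simp [slTransform_eq, coe_slTorus, torusWeight]

end Transform

section Homogeneity

variable {R A : Type*} [CommSemiring R] [CommRing A]

/-- The degrees of the six variables in `N`, in `e` and in `ε`, as weights for
`IsWeightedHomogeneous`. -/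
def tridegree : Fin 6 → ℕ × ℕ × ℕ :=
  ![(1, 0, 0), (1, 0, 0), (0, 1, 0), (0, 1, 0), (0, 0, 1), (0, 0, 1)]

lemma weight_tridegree (c : Fin 6 →₀ ℕ) :
    Finsupp.weight tridegree c = (c 0 + c 1, c 2 + c 3, c 4 + c 5) := by
  ext <;> simp [Finsupp.weight_apply, Finsupp.sum_fintype, Fin.sum_univ_six, tridegree]

lemma weight_torusWeight (c : Fin 6 →₀ ℕ) :
    Finsupp.weight torusWeight c = c 0 - c 1 + c 2 - c 3 - c 4 + c 5 := by
  simp [Finsupp.weight_apply, Finsupp.sum_fintype, Fin.sum_univ_six, torusWeight, sub_eq_add_neg]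

lemma isWeightedHomogeneous_tridegree_iff {F : MvPolynomial (Fin 6) R} {k m n : ℕ} :
    IsWeightedHomogeneous tridegree F (k, m, n) ↔
      ∀ c ∈ F.support, c 0 + c 1 = k ∧ c 2 + c 3 = m ∧ c 4 + c 5 = n := by
  simp only [IsWeightedHomogeneous, weight_tridegree, Prod.mk.injEq, mem_support_iff]

lemma isWeightedHomogeneous_psiAt_X {k m d : ℕ} (hdk : d ≤ k) (hdm : d ≤ m) :
    IsWeightedHomogeneous tridegree (psiAt k m d (X : Fin 6 → MvPolynomial (Fin 6) A))
      (k, m, m + k - 2 * d) := by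
  have h_X := isWeightedHomogeneous_X A tridegree
  have h_contractN : IsWeightedHomogeneous tridegree
      (contractN (X : Fin 6 → MvPolynomial (Fin 6) A)) (1, 0, 1) :=
    ((h_X 0).mul (h_X 4)).add ((h_X 1).mul (h_X 5))
  have h_contractE : IsWeightedHomogeneous tridegree
      (contractE (X : Fin 6 → MvPolynomial (Fin 6) A)) (0, 1, 1) :=
    ((h_X 2).mul (h_X 4)).add ((h_X 3).mul (h_X 5))
  have h_areaForm : IsWeightedHomogeneous tridegree
      (areaForm (X : Fin 6 → MvPolynomial (Fin 6) A)) (1, 1, 0) :=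
    ((h_X 0).mul (h_X 3)).sub ((h_X 1).mul (h_X 2))
  have h_degree : (k - d) • ((1, 0, 1) : ℕ × ℕ × ℕ) + (m - d) • (0, 1, 1) + d • (1, 1, 0) =
      (k, m, m + k - 2 * d) := by
    ext <;> simp <;> omega
  exact h_degree ▸ ((h_contractN.pow _).mul (h_contractE.pow _)).mul (h_areaForm.pow _)

lemma exists_eval_normal_form_eq {k m d : ℕ} (hdk : d ≤ k) (hdm : d ≤ m)
    {F : MvPolynomial (Fin 6) R}
    (h_tri : IsWeightedHomogeneous tridegree F (k, m, m + k - 2 * d))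
    (h_torus : IsWeightedHomogeneous torusWeight F 0) :
    ∃ a : R, ∀ D p r : R,
      eval ![1, 0, 0, D, p, r] F = a * (D ^ m * p ^ (k - d) * r ^ (m - d)) := by
  let c₀ : Fin 6 →₀ ℕ := Finsupp.equivFunOnFinite.symm ![k, 0, 0, m, k - d, m - d]
  refine ⟨coeff c₀ F, fun D p r => ?_⟩
  have h_unique : ∀ c ∈ F.support, c 1 = 0 → c 2 = 0 → c = c₀ := by
    intro c hc h1 h2
    have h_deg := h_tri (mem_support_iff.1 hc)
    have h_wt := h_torus (mem_support_iff.1 hc)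
    rw [weight_tridegree, Prod.mk.injEq, Prod.mk.injEq] at h_deg
    rw [weight_torusWeight] at h_wt
    ext i
    fin_cases i <;> simp [c₀] <;> omega
  rw [eval_eq', Finset.sum_eq_single c₀]
  · simp [Fin.prod_univ_six, c₀]
  · intro c hc h_ne
    rcases not_and_or.1 fun h => h_ne (h_unique c hc h.1 h.2) with h | h
    · rw [Finset.prod_eq_zero (Finset.mem_univ (1 : Fin 6)) (zero_pow h), mul_zero]
    · rw [Finset.prod_eq_zero (Finset.mem_univ (2 : Fin 6)) (zero_pow h), mul_zero]
  · intro h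
    rw [notMem_support_iff.1 h, zero_mul]

end Homogeneity

section InvariantPolynomials

variable {K L : Type*} [Field K]

lemma exists_slTransform_eq_normal_form {y : Fin 6 → K} (hy : areaForm y ≠ 0) :
    ∃ g : Matrix.SpecialLinearGroup (Fin 2) K, slTransform g y =
      ![1, 0, 0, areaForm y, contractN y, contractE y / areaForm y] := by
  have h_det : !![y 3 / areaForm y, -y 1; -y 2 / areaForm y, y 0].det = 1 := by
    rw [Matrix.det_fin_two_of]
    field_simp
    rw [areaForm]
    ring
  obtain ⟨g, hg⟩ : ∃ g : Matrix.SpecialLinearGroup (Fin 2) K, (g : Matrix (Fin 2) (Fin 2) K) =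
      !![y 3 / areaForm y, -y 1; -y 2 / areaForm y, y 0] := ⟨⟨_, h_det⟩, rfl⟩
  refine ⟨g, funext fun i => ?_⟩
  rw [slTransform_eq, hg]
  fin_cases i <;> simp <;> field_simp <;> grind only [areaForm, contractN, contractE]

lemma normal_form_monomial_eq_psiAt {k m d : ℕ} (hdm : d ≤ m) {y : Fin 6 → K}
    (hy : areaForm y ≠ 0) :
    areaForm y ^ m * contractN y ^ (k - d) * (contractE y / areaForm y) ^ (m - d) =
      psiAt k m d y := by
  have h_pow : areaForm y ^ m = areaForm y ^ (m - d) * areaForm y ^ d := by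
    rw [← pow_add, Nat.sub_add_cancel hdm]
  rw [psiAt, h_pow, div_pow]
  field_simp

variable [Infinite K] [CommRing L] [IsDomain L] [Algebra K L]

lemma isWeightedHomogeneous_torusWeight_of_invariant {F : MvPolynomial (Fin 6) L}
    (hF : ∀ g : Matrix.SpecialLinearGroup (Fin 2) K, slSubst g F = F) :
    IsWeightedHomogeneous torusWeight F 0 :=
  have := infinite_units (K := K)
  isWeightedHomogeneous_zero_of_forall_aeval_zpow_smul_X (K := K) torusWeight fun t => by
    rw [← slTransform_slTorus, ← slSubst, hF]

lemma eq_of_forall_eval_eq_of_areaForm_ne_zero {F G : MvPolynomial (Fin 6) L}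
    (h : ∀ y : Fin 6 → K, areaForm y ≠ 0 →
      eval (algebraMap K L ∘ y) F = eval (algebraMap K L ∘ y) G) : F = G := by
  have h_areaForm : areaForm (X : Fin 6 → MvPolynomial (Fin 6) L) ≠ 0 := by
    simpa [psiAt] using psiAt_X_ne_zero (A := L) 1 1 1
  apply mul_left_cancel₀ h_areaForm
  apply funext_set (fun _ => Set.range (algebraMap K L))
    (fun _ => Set.infinite_range_of_injective (FaithfulSMul.algebraMap_injective K L))
  intro x hx
  choose y hy using fun i => hx i (Set.mem_univ i)
  obtain rfl : algebraMap K L ∘ y = x := funext hy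
  rw [map_mul, map_mul]
  by_cases h_zero : areaForm y = 0
  · have h_eval : eval (algebraMap K L ∘ y) (areaForm X) = 0 := by
      simp only [map_areaForm, eval_X, Function.comp_def]
      rw [← map_areaForm, h_zero, map_zero]
    rw [h_eval, zero_mul, zero_mul]
  · rw [h y h_zero]

lemma exists_eq_smul_psiAt_X {k m d : ℕ} (hdk : d ≤ k) (hdm : d ≤ m) {F : MvPolynomial (Fin 6) L}
    (h_tri : IsWeightedHomogeneous tridegree F (k, m, m + k - 2 * d))
    (hF : ∀ g : Matrix.SpecialLinearGroup (Fin 2) K, slSubst g F = F) :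
    ∃ a : L, F = a • psiAt k m d X := by
  have h_torus := isWeightedHomogeneous_torusWeight_of_invariant hF
  obtain ⟨a, ha⟩ := exists_eval_normal_form_eq hdk hdm h_tri h_torus
  refine ⟨a, eq_of_forall_eval_eq_of_areaForm_ne_zero (K := K) fun y hy => ?_⟩
  obtain ⟨g, hg⟩ := exists_slTransform_eq_normal_form hy
  have h_point : slTransform g (algebraMap K L ∘ y) =
      ![1, 0, 0, algebraMap K L (areaForm y), algebraMap K L (contractN y),
        algebraMap K L (contractE y / areaForm y)] := by
    have h_comp := map_comp_slTransform (Algebra.ofId K L) g y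
    rw [hg] at h_comp
    refine h_comp.symm.trans (funext fun i => ?_)
    fin_cases i <;> simp [Algebra.ofId_apply]
  calc eval (algebraMap K L ∘ y) F
      = eval (slTransform g (algebraMap K L ∘ y)) F := by rw [← eval_slSubst, hF]
    _ = a * algebraMap K L (psiAt k m d y) := by
      rw [h_point, ha, ← normal_form_monomial_eq_psiAt hdm hy]
      simp only [map_mul, map_pow]
    _ = eval (algebraMap K L ∘ y) (a • psiAt k m d X) := by
      simp only [smul_eval, map_psiAt, eval_X, Function.comp_def]

end InvariantPolynomials

lemma psi_eq_psiAt_X (k m d : ℕ) : psi k m d = psiAt k m d X := rfl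

lemma slAct_eq_slSubst (g : Matrix.SpecialLinearGroup (Fin 2) ℝ) : slAct g = slSubst g := by
  rw [slAct, slSubst, slTransform]
  simp only [gEntry, gInvEntry, Complex.coe_smul]

theorem stmt6_general {K L : Type*} [Field K] [Infinite K] [CommRing L] [IsDomain L] [Algebra K L]
    (k m d : ℕ) (hdk : d ≤ k) (hdm : d ≤ m) :
    (∀ F : MvPolynomial (Fin 6) L,
      ((∀ c ∈ F.support, c 0 + c 1 = k ∧ c 2 + c 3 = m ∧ c 4 + c 5 = m + k - 2 * d) ∧
        ∀ g : Matrix.SpecialLinearGroup (Fin 2) K, slSubst g F = F)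
      ↔ ∃ a : L, F = a • psiAt k m d X) ∧
    psiAt k m d (X : Fin 6 → MvPolynomial (Fin 6) L) ≠ 0 := by
  refine ⟨fun F => ?_, psiAt_X_ne_zero k m d⟩
  rw [← isWeightedHomogeneous_tridegree_iff]
  constructor
  · rintro ⟨h_tri, hF⟩
    exact exists_eq_smul_psiAt_X hdk hdm h_tri hF
  · rintro ⟨a, rfl⟩
    refine ⟨(weightedHomogeneousSubmodule L _ _).smul_mem a
      (isWeightedHomogeneous_psiAt_X hdk hdm), fun g => ?_⟩
    rw [map_smul, slSubst_psiAt_X]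

/-- for `0 ≤ d ≤ min(k,m)`, the space of polynomials
`F ∈ ℂ[N₁,N₂,e₁,e₂,ε₁,ε₂]` that are homogeneous of degree `k` in `(N₁,N₂)`, of degree `m`
in `(e₁,e₂)` and of degree `m+k−2d` in `(ε₁,ε₂)`, and invariant under `SL(2,ℝ)`, is
one-dimensional, spanned by `ψ`. -/
theorem stmt6 (k m d : ℕ) (hdk : d ≤ k) (hdm : d ≤ m) :
    (∀ F : MvPolynomial (Fin 6) ℂ,
      ((∀ c ∈ F.support, c 0 + c 1 = k ∧ c 2 + c 3 = m ∧ c 4 + c 5 = m + k - 2 * d) ∧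
        ∀ g : Matrix.SpecialLinearGroup (Fin 2) ℝ, slAct g F = F)
      ↔ ∃ a : ℂ, F = a • psi k m d) ∧
    psi k m d ≠ 0 := by
  simpa only [slAct_eq_slSubst, psi_eq_psiAt_X] using
    stmt6_general (K := ℝ) (L := ℂ) k m d hdk hdm
end
end

section
/- Let m, k be nonnegative integers and let f₀, …, f_m : ℝ² → ℂ be smooth functions. For 0 ≤ q ≤ m + k + 1 define g_q := Σ binom(k+1, r) ∂₁^{k+1−r}∂₂^{r} f_j, the sum being over all pairs (j, r) with 0 ≤ j ≤ m, 0 ≤ r ≤ k + 1 and j + r = q. Then for every integer i with 0 ≤ i ≤ k one has Σ_{r=0}^{m+1} (−1)^r · ( binom(m+1, r) / binom(m+k+1, m+1+i−r) ) · ∂₁^{m+1−r}∂₂^{r} g_{m+1+i−r} = 0 identically on ℝ². (Equivalently: the composition 𝒫^{k}_{m+k+1,m+1} ∘ 𝒞^{m+k+1}_{m,k+1} of the PRV operator with the Cartan operator is the zero operator.) -/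
open Finset

/-- Partial derivative in the first coordinate direction of ℝ². -/
noncomputable def pd1 (F : ℝ × ℝ → ℂ) : ℝ × ℝ → ℂ := fun p => fderiv ℝ F p (1, 0)

/-- Partial derivative in the second coordinate direction of ℝ². -/
noncomputable def pd2 (F : ℝ × ℝ → ℂ) : ℝ × ℝ → ℂ := fun p => fderiv ℝ F p (0, 1)

/-! Let `A`, `B` be commuting operators. In the `i`-th component of the PRV operator applied to the
Cartan operator, `f j` only occurs through `A ^ (n + j - i) (B ^ (l + i - j) (f j))`, and its
coefficient is an alternating sum over `r` of `l.choose r` times the quotient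
`n.choose (q - j) / (m + n).choose q`, where `q = l + i - r`. Up to a constant, the quotient is the
product of the falling factorials of `q` of length `j` and of `m + n - q` of length `m - j`, hence a
polynomial of degree `m` in `r`. The alternating sum is, up to sign, its `l`-th finite difference,
which vanishes for `m < l`. -/

open Polynomial in
lemma sum_neg_one_pow_mul_choose_mul_eval_eq_zero {R : Type*} [CommRing R] {P : R[X]} {n : ℕ}
    (hP : P.natDegree < n) :
    ∑ r ∈ range (n + 1), (-1 : R) ^ r * n.choose r * P.eval (r : R) = 0 := by
  have hdiff : ∑ r ∈ range (n + 1), (-1 : R) ^ (n - r) * n.choose r * P.eval (r : R) = 0 := by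
    simpa [fwdDiff_iter_eq_sum_shift] using congrFun (fwdDiff_iter_eq_zero_of_degree_lt hP) 0
  calc ∑ r ∈ range (n + 1), (-1 : R) ^ r * n.choose r * P.eval (r : R)
      = (-1) ^ n * ∑ r ∈ range (n + 1), (-1 : R) ^ (n - r) * n.choose r * P.eval (r : R) := by
        rw [mul_sum]
        refine sum_congr rfl fun r hr ↦ ?_
        have hsign : (-1 : R) ^ r = (-1) ^ n * (-1) ^ (n - r) := by
          rw [← pow_add, show n + (n - r) = r + 2 * (n - r) by grind, pow_add, pow_mul]
          simp
        rw [hsign]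
        ring
    _ = 0 := by rw [hdiff, mul_zero]

open Polynomial in
lemma sum_neg_one_pow_mul_choose_mul_descFactorial_eq_zero {R : Type*} [CommRing R] [IsDomain R]
    {a l j k : ℕ} (b : ℕ) (hla : l ≤ a) (hl : j + k < l) :
    ∑ r ∈ range (l + 1), (-1 : R) ^ r * l.choose r *
      ((a - r).descFactorial j * (b + r).descFactorial k) = 0 := by
  let P : R[X] := (descPochhammer R j).comp (C (a : R) - X) *
    (descPochhammer R k).comp (X + C (b : R))
  have hP : P.natDegree < l :=
    calc P.natDegree ≤ j * (C (a : R) - X).natDegree + k * (X + C (b : R)).natDegree :=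
          natDegree_mul_le.trans_eq (by simp only [natDegree_comp, descPochhammer_natDegree])
      _ = j + k := by rw [natDegree_X_add_C, natDegree_sub, natDegree_X_sub_C, mul_one, mul_one]
      _ < l := hl
  rw [← sum_neg_one_pow_mul_choose_mul_eval_eq_zero hP]
  refine sum_congr rfl fun r hr ↦ ?_
  have hra : r ≤ a := by grind
  have heval : P.eval (r : R) = (a - r).descFactorial j * (b + r).descFactorial k := by
    simp only [P, eval_mul, eval_comp, eval_sub, eval_add, eval_C, eval_X]
    rw [← Nat.cast_sub hra, ← Nat.cast_add, add_comm r, descPochhammer_eval_eq_descFactorial,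
      descPochhammer_eval_eq_descFactorial]
  rw [heval]

open Nat in
lemma choose_mul_descFactorial_mul_descFactorial_mul_factorial (j l s t : ℕ) :
    (j + s + (l + t)).choose (j + s) * ((j + s).descFactorial j * (l + t).descFactorial l) *
      (s + t)! = (j + s + (l + t))! * (s + t).choose s := by
  have hj : s ! * (j + s).descFactorial j = (j + s)! := by
    simpa using factorial_mul_descFactorial (Nat.le_add_right j s)
  have hl : t ! * (l + t).descFactorial l = (l + t)! := by
    simpa using factorial_mul_descFactorial (Nat.le_add_right l t)
  rw [← add_choose_mul_factorial_mul_factorial (j + s) (l + t),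
    ← add_choose_mul_factorial_mul_factorial s t, ← hj, ← hl, choose_symm_add, choose_symm_add]
  ring

open Nat in
lemma choose_sub_div_choose_eq_descFactorial {K : Type*} [Field K] [CharZero K] {m n j q : ℕ}
    (hj : j ≤ m) (hq : q ≤ m + n) :
    ((if j ≤ q then n.choose (q - j) else 0 : ℕ) : K) / (m + n).choose q =
      n ! / (m + n)! * (q.descFactorial j * (m + n - q).descFactorial (m - j)) := by
  have hchoose : ((m + n).choose q : K) ≠ 0 := mod_cast (choose_pos hq).ne'
  have hfact : ((m + n)! : K) ≠ 0 := mod_cast (m + n).factorial_ne_zero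
  suffices h : (m + n).choose q * (q.descFactorial j * (m + n - q).descFactorial (m - j)) * n ! =
      (m + n)! * if j ≤ q then n.choose (q - j) else 0 by
    have hK := congrArg (Nat.cast : ℕ → K) h
    simp only [Nat.cast_mul] at hK
    field_simp
    linear_combination -hK
  split_ifs with hjq
  · by_cases hqn : q - j ≤ n
    · obtain ⟨s, rfl⟩ := Nat.exists_eq_add_of_le hjq
      obtain ⟨l, rfl⟩ := Nat.exists_eq_add_of_le hj
      obtain ⟨t, rfl⟩ := Nat.exists_eq_add_of_le (show s ≤ n by lia)
      have h := choose_mul_descFactorial_mul_descFactorial_mul_factorial j l s t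
      rwa [show j + l + (s + t) = j + s + (l + t) by ring, Nat.add_sub_cancel_left,
        Nat.add_sub_cancel_left, Nat.add_sub_cancel_left]
    · rw [choose_eq_zero_of_lt (not_le.1 hqn),
        descFactorial_eq_zero_iff_lt.2 (show m + n - q < m - j by lia)]
      simp
  · rw [descFactorial_eq_zero_iff_lt.2 (show q < j by lia)]
    simp

lemma sum_neg_one_pow_mul_choose_div_choose_eq_zero {K : Type*} [Field K] [CharZero K]
    {m n l i j : ℕ} (hj : j ≤ m) (hl : m < l) (hi : l + i ≤ m + n) :
    ∑ r ∈ range (l + 1), (-1 : K) ^ r * (l.choose r / (m + n).choose (l + i - r)) *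
      (if j ≤ l + i - r then n.choose (l + i - r - j) else 0 : ℕ) = 0 := by
  have halt := sum_neg_one_pow_mul_choose_mul_descFactorial_eq_zero (R := K) (j := j) (k := m - j)
    (m + n - (l + i)) (Nat.le_add_right l i) (by lia)
  rw [← mul_zero ((n.factorial : K) / (m + n).factorial), ← halt, mul_sum]
  refine sum_congr rfl fun r hr ↦ ?_
  have hquot := choose_sub_div_choose_eq_descFactorial (K := K) hj (show l + i - r ≤ m + n by lia)
  rw [show m + n - (l + i - r) = m + n - (l + i) + r by grind] at hquot
  linear_combination (-1 : K) ^ r * l.choose r * hquot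

section Operators

variable (K : Type*) [Field K] {V W : Type*} [AddCommGroup V] [Module K V] [AddCommGroup W]
  [Module K W]

/-- The component of index `q` of the Cartan operator `𝒞^{m+n}_{m,n}`, with two arbitrary operators
`A`, `B` in the place of `∂₁`, `∂₂`. The `m + 1` components of the argument are `f`; the components
of the result are indexed by all of `ℕ`, those of index `q > m + n` being zero. -/
def cartan (A B : V → V) (m n : ℕ) (f : Fin (m + 1) → V) (q : ℕ) : V :=
  ∑ j : Fin (m + 1), ∑ r ∈ range (n + 1),
    if (j : ℕ) + r = q then (n.choose r : K) • A^[n - r] (B^[r] (f j)) else 0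

/-- The component of index `i` of the PRV operator `𝒫^{d-l}_{d,l}`, with two arbitrary operators
`A`, `B` in the place of `∂₁`, `∂₂`, applied to the tuple with components `g 0, …, g d`. It is
meaningful for `l + i ≤ d`; beyond, a zero binomial coefficient occurs as a divisor. -/
def prv (A B : V → V) (d l : ℕ) (g : ℕ → V) (i : ℕ) : V :=
  ∑ r ∈ range (l + 1),
    ((-1 : K) ^ r * (l.choose r / d.choose (l + i - r))) • A^[l - r] (B^[r] (g (l + i - r)))

variable {K}

lemma map_cartan (φ : V →ₗ[K] W) {A B : V → V} {A' B' : W → W} (hA : Function.Semiconj φ A A')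
    (hB : Function.Semiconj φ B B') {m : ℕ} (n : ℕ) (f : Fin (m + 1) → V) (q : ℕ) :
    φ (cartan K A B m n f q) = cartan K A' B' m n (φ ∘ f) q := by
  simp only [cartan, map_sum, apply_ite φ, map_smul, map_zero, (hA.iterate_right _).eq,
    (hB.iterate_right _).eq, Function.comp_apply]

lemma map_prv (φ : V →ₗ[K] W) {A B : V → V} {A' B' : W → W} (hA : Function.Semiconj φ A A')
    (hB : Function.Semiconj φ B B') (d l : ℕ) (g : ℕ → V) (i : ℕ) :
    φ (prv K A B d l g i) = prv K A' B' d l (φ ∘ g) i := by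
  simp only [prv, map_sum, map_smul, (hA.iterate_right _).eq, (hB.iterate_right _).eq,
    Function.comp_apply]

lemma cartan_eq_sum_choose_smul (A B : V → V) (m n : ℕ) (f : Fin (m + 1) → V) (q : ℕ) :
    cartan K A B m n f q = ∑ j : Fin (m + 1),
      ((if (j : ℕ) ≤ q then n.choose (q - j) else 0 : ℕ) : K) •
        A^[n - (q - j)] (B^[q - j] (f j)) := by
  refine sum_congr rfl fun j _ ↦ ?_
  split_ifs with hjq
  · have hiff (r : ℕ) : (j : ℕ) + r = q ↔ q - j = r := by lia
    simp only [hiff, sum_ite_eq]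
    split_ifs with hmem
    · rfl
    · rw [Nat.choose_eq_zero_of_lt (by grind), Nat.cast_zero, zero_smul]
  · rw [Nat.cast_zero, zero_smul]
    exact sum_eq_zero fun r _ ↦ if_neg (by lia)

lemma iterate_iterate_cartan {A B : Module.End K V} (hAB : Commute A B) (a b m n : ℕ)
    (f : Fin (m + 1) → V) (q : ℕ) :
    A^[a] (B^[b] (cartan K A B m n f q)) = ∑ j : Fin (m + 1),
      ((if (j : ℕ) ≤ q then n.choose (q - j) else 0 : ℕ) : K) •
        A^[a + n + j - q] (B^[b + q - j] (f j)) := by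
  simp only [cartan_eq_sum_choose_smul, ← Module.End.pow_apply, map_sum, map_smul]
  refine sum_congr rfl fun j _ ↦ ?_
  by_cases hjq : (j : ℕ) ≤ q
  · by_cases hqn : q - j ≤ n
    · rw [show a + n + j - q = a + (n - (q - j)) by lia, show b + q - j = b + (q - j) by lia,
        pow_add, pow_add]
      have hcomm := hAB.pow_pow (n - (q - j)) b
      simp only [← Module.End.mul_apply, mul_assoc]
      simp only [← mul_assoc, hcomm.eq]
    · simp only [Nat.choose_eq_zero_of_lt (not_le.1 hqn), ite_self, Nat.cast_zero, zero_smul]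
  · simp only [if_neg hjq, Nat.cast_zero, zero_smul]

theorem prv_cartan_eq_zero [CharZero K] {A B : Module.End K V} (hAB : Commute A B)
    {m n l i : ℕ} (hl : m < l) (hi : l + i ≤ m + n) (f : Fin (m + 1) → V) :
    prv K A B (m + n) l (cartan K A B m n f) i = 0 := by
  have hterm : ∀ r ∈ range (l + 1), A^[l - r] (B^[r] (cartan K A B m n f (l + i - r))) =
      ∑ j : Fin (m + 1), ((if (j : ℕ) ≤ l + i - r then n.choose (l + i - r - j) else 0 : ℕ) : K) •
        A^[n + j - i] (B^[l + i - j] (f j)) := by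
    intro r hr
    have hr : r ≤ l := by grind
    rw [iterate_iterate_cartan hAB]
    simp only [show r + (l + i - r) = l + i by lia,
      fun j : ℕ ↦ show l - r + n + j - (l + i - r) = n + j - i by lia]
  calc prv K A B (m + n) l (cartan K A B m n f) i
      = ∑ j : Fin (m + 1), (∑ r ∈ range (l + 1),
          (-1 : K) ^ r * (l.choose r / (m + n).choose (l + i - r)) *
            (if (j : ℕ) ≤ l + i - r then n.choose (l + i - r - j) else 0 : ℕ)) •
          A^[n + j - i] (B^[l + i - j] (f j)) := by
        rw [prv, sum_congr rfl fun r hr ↦ by rw [hterm r hr, smul_sum], sum_comm]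
        simp only [smul_smul, sum_smul]
    _ = 0 := by
        refine sum_eq_zero fun j _ ↦ ?_
        rw [sum_neg_one_pow_mul_choose_div_choose_eq_zero (by lia) hl hi, zero_smul]

end Operators

section DirectionalDerivative

open scoped ContDiff

variable {𝕜 : Type*} [NontriviallyNormedField 𝕜] {E F : Type*} [NormedAddCommGroup E]
  [NormedSpace 𝕜 E] [NormedAddCommGroup F] [NormedSpace 𝕜 F]

variable (𝕜) in
/-- The directional derivative of `h` along `v`, a common form of the partial derivatives `pd1` and
`pd2`. Unlike `lineDeriv`, it is read off the Fréchet derivative, and so has the junk value `0` at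
points where `h` is not Fréchet differentiable. -/
noncomputable def dirDeriv (v : E) (h : E → F) : E → F := fun x ↦ fderiv 𝕜 h x v

lemma dirDeriv_add {h₁ h₂ : E → F} (hh₁ : Differentiable 𝕜 h₁) (hh₂ : Differentiable 𝕜 h₂)
    (v : E) : dirDeriv 𝕜 v (h₁ + h₂) = dirDeriv 𝕜 v h₁ + dirDeriv 𝕜 v h₂ := by
  funext x
  simp [dirDeriv, fderiv_add (hh₁ x) (hh₂ x)]

lemma dirDeriv_const_smul {R : Type*} [Semiring R] [Module R F] [SMulCommClass 𝕜 R F]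
    [ContinuousConstSMul R F] {h : E → F} (hh : Differentiable 𝕜 h) (v : E) (c : R) :
    dirDeriv 𝕜 v (c • h) = c • dirDeriv 𝕜 v h := by
  funext x
  simp [dirDeriv, fderiv_const_smul (hh x) c]

lemma contDiff_dirDeriv {m n : ℕ∞ω} {h : E → F} (hh : ContDiff 𝕜 n h) (hmn : m + 1 ≤ n) (v : E) :
    ContDiff 𝕜 m (dirDeriv 𝕜 v h) :=
  (hh.fderiv_right hmn).clm_apply contDiff_const

lemma dirDeriv_comm [IsRCLikeNormedField 𝕜] {h : E → F} (hh : ContDiff 𝕜 2 h) (v w : E) :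
    dirDeriv 𝕜 v (dirDeriv 𝕜 w h) = dirDeriv 𝕜 w (dirDeriv 𝕜 v h) := by
  have hsecond (x a b : E) :
      dirDeriv 𝕜 a (dirDeriv 𝕜 b h) x = fderiv 𝕜 (fderiv 𝕜 h) x a b := by
    have hdiff : DifferentiableAt 𝕜 (fderiv 𝕜 h) x :=
      (hh.fderiv_right (m := 1) (by norm_num)).differentiable one_ne_zero x
    change fderiv 𝕜 (fun y ↦ fderiv 𝕜 h y b) x a = _
    simp [fderiv_clm_apply hdiff (differentiableAt_const b)]
  funext x
  have hsymm : IsSymmSndFDerivAt 𝕜 h x := hh.contDiffAt.isSymmSndFDerivAt (by simp)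
  rw [hsecond, hsecond, hsymm.eq]

variable (𝕜 E F) (K : Type*) [Field K] [Module K F] [SMulCommClass 𝕜 K F]
  [ContinuousConstSMul K F]

/-- The smooth functions `E → F`, on which directional derivatives are linear and commute. The
scalars `K` need not be those of differentiation: for complex functions on `ℝ²` they are `ℂ`. -/
def smoothFunctions : Submodule K (E → F) where
  carrier := {h | ContDiff 𝕜 ∞ h}
  add_mem' := fun (h₁ : ContDiff 𝕜 ∞ _) (h₂ : ContDiff 𝕜 ∞ _) ↦ h₁.add h₂
  zero_mem' := show ContDiff 𝕜 ∞ (fun _ ↦ (0 : F)) from contDiff_const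
  smul_mem' := fun c _ (hh : ContDiff 𝕜 ∞ _) ↦ hh.const_smul c

variable {E F K}

lemma contDiff_coe_smoothFunctions (h : smoothFunctions 𝕜 E F K) : ContDiff 𝕜 ∞ (h : E → F) := h.2

lemma differentiable_coe_smoothFunctions (h : smoothFunctions 𝕜 E F K) :
    Differentiable 𝕜 (h : E → F) :=
  (contDiff_coe_smoothFunctions 𝕜 h).differentiable (by simp)

variable (F K)

/-- The directional derivative along `v` as a `K`-linear endomorphism of the smooth functions. -/
noncomputable def smoothDirDeriv (v : E) : Module.End K (smoothFunctions 𝕜 E F K) where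
  toFun h := ⟨dirDeriv 𝕜 v h,
    contDiff_dirDeriv (m := ∞) (contDiff_coe_smoothFunctions 𝕜 h) le_rfl v⟩
  map_add' h₁ h₂ := Subtype.ext <|
    dirDeriv_add (differentiable_coe_smoothFunctions 𝕜 h₁)
      (differentiable_coe_smoothFunctions 𝕜 h₂) v
  map_smul' c h := Subtype.ext <|
    dirDeriv_const_smul (differentiable_coe_smoothFunctions 𝕜 h) v c

lemma commute_smoothDirDeriv [IsRCLikeNormedField 𝕜] (v w : E) :
    Commute (smoothDirDeriv 𝕜 F K v) (smoothDirDeriv 𝕜 F K w) :=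
  LinearMap.ext fun h ↦ Subtype.ext <|
    dirDeriv_comm (contDiff_infty.1 (contDiff_coe_smoothFunctions 𝕜 h) 2) v w

theorem stmt7_general [IsRCLikeNormedField 𝕜] [CharZero K] (v w : E) {m n l i : ℕ} (hl : m < l)
    (hi : l + i ≤ m + n) {f : Fin (m + 1) → E → F} (hf : ∀ j, ContDiff 𝕜 ∞ (f j)) :
    prv K (dirDeriv 𝕜 v) (dirDeriv 𝕜 w) (m + n) l
      (cartan K (dirDeriv 𝕜 v) (dirDeriv 𝕜 w) m n f) i = 0 := by
  let φ := (smoothFunctions 𝕜 E F K).subtype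
  let f' : Fin (m + 1) → smoothFunctions 𝕜 E F K := fun j ↦ ⟨f j, hf j⟩
  have hφ (u : E) : Function.Semiconj φ (smoothDirDeriv 𝕜 F K u) (dirDeriv 𝕜 u) := fun _ ↦ rfl
  have hcartan : φ ∘ cartan K (smoothDirDeriv 𝕜 F K v) (smoothDirDeriv 𝕜 F K w) m n f' =
      cartan K (dirDeriv 𝕜 v) (dirDeriv 𝕜 w) m n f :=
    funext (map_cartan φ (hφ v) (hφ w) n f')
  rw [← hcartan, ← map_prv φ (hφ v) (hφ w),
    prv_cartan_eq_zero (commute_smoothDirDeriv 𝕜 F K v w) hl hi, map_zero]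

end DirectionalDerivative

/-- the composition of the PRV operator `𝒫^{k}_{m+k+1,m+1}` with the Cartan
operator `𝒞^{m+k+1}_{m,k+1}` vanishes.  In components: with
`g_q = Σ_{j+r=q} C(k+1,r) ∂₁^{k+1−r}∂₂^r f_j`, one has, for each `0 ≤ i ≤ k`,
`Σ_{r=0}^{m+1} (−1)^r (C(m+1,r)/C(m+k+1, m+1+i−r)) ∂₁^{m+1−r}∂₂^r g_{m+1+i−r} = 0`. -/
theorem stmt7 (m k : ℕ) (f : Fin (m + 1) → ℝ × ℝ → ℂ)
    (hf : ∀ j, ContDiff ℝ (⊤ : ℕ∞) (f j))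
    (g : ℕ → ℝ × ℝ → ℂ)
    (hg : ∀ q, g q = ∑ j : Fin (m + 1), ∑ r ∈ Finset.range (k + 2),
      if (j : ℕ) + r = q then
        (Nat.choose (k + 1) r : ℂ) • pd1^[k + 1 - r] (pd2^[r] (f j))
      else 0) :
    ∀ i ≤ k, ∀ p : ℝ × ℝ,
      ∑ r ∈ Finset.range (m + 2),
        ((-1 : ℂ)) ^ r
          * ((Nat.choose (m + 1) r : ℂ) / (Nat.choose (m + k + 1) (m + 1 + i - r) : ℂ))
          * (pd1^[m + 1 - r] (pd2^[r] (g (m + 1 + i - r))) p) = 0 := by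
  intro i hi p
  obtain rfl : g = cartan ℂ pd1 pd2 m (k + 1) f := funext hg
  have hzero : prv ℂ pd1 pd2 (m + (k + 1)) (m + 1) (cartan ℂ pd1 pd2 m (k + 1) f) i = 0 :=
    stmt7_general ℝ ℂ ℂ (1, 0) (0, 1) m.lt_succ_self (by lia) hf
  simpa [prv, ← add_assoc] using congrFun hzero p
end
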